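/- arXiv:1306.2674 — 3 statements merged into one kernel-verified Lean document; each statement's English description precedes it below -/
import Mathlib

section
/- Let (μ_n)_{n≥1} be a sequence of Borel probability measures on ℝ, each infinitely divisible with respect to classical convolution (i.e., for every n and every m ≥ 1 there exists a Borel probability measure ν with μ_n equal to the m-fold convolution ν ∗ ν ∗ ⋯ ∗ ν). Assume each μ_n has mean 0 (∫ x dμ_n = 0), variance 1 (∫ x² dμ_n = 1), finite fourth moment, and ∫ x⁴ dμ_n → 3 as n → ∞. Then μ_n converges weakly to the standard Gaussian measure N(0,1) on ℝ. -/
open MeasureTheory Filter Topology BoundedContinuousFunction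

/-- Classical convolution of two Borel measures on ℝ: the pushforward of the
product measure under addition. -/
noncomputable def classicalConv (μ ν : Measure ℝ) : Measure ℝ :=
  (μ.prod ν).map (fun p => p.1 + p.2)

/-- The m-fold classical convolution power of a measure (0th power is δ₀). -/
noncomputable def convPow (ν : Measure ℝ) : ℕ → Measure ℝ
  | 0 => Measure.dirac 0
  | n + 1 => classicalConv (convPow ν n) ν

/-- A probability measure is classically infinitely divisible if for every m ≥ 1 it
is the m-fold classical convolution power of some probability measure. -/
def IsClassicallyInfDiv (μ : Measure ℝ) : Prop :=
  ∀ m : ℕ, 1 ≤ m → ∃ ν : Measure ℝ, IsProbabilityMeasure ν ∧ μ = convPow ν m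

/-- Weak convergence of a sequence of measures: convergence of integrals of all
bounded continuous functions. -/
def WeakConv (μs : ℕ → Measure ℝ) (μ : Measure ℝ) : Prop :=
  ∀ f : ℝ →ᵇ ℝ, Tendsto (fun n => ∫ x, f x ∂(μs n)) atTop (𝓝 (∫ x, f x ∂μ))

/-!
For centred measures the second moment `σ²` and the fourth cumulant `κ = ∫ x⁴ - 3σ⁴` are additive
under convolution. Hence if `μ` is the `m`-fold convolution power of `ν`, then `ν` has variance
`σ² / m` and fourth moment `κ / m + 3σ⁴ / m²`, and by Cauchy–Schwarz its third absolute moment is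
at most `m⁻¹ √(σ² (κ + 3σ⁴ / m))`. A second-order Taylor expansion of the characteristic function of
`ν`, raised to the `m`-th power, therefore approximates that of `μ` by `(1 - t²σ² / (2m)) ^ m` up to
`|t|³ / 2 * √(σ² (κ + 3σ⁴ / m))`. Letting `m → ∞` for a fixed infinitely divisible `μ` gives
`|charFun μ t - exp (-t²σ² / 2)| ≤ |t|³ / 2 * √(σ² κ)`, so `κ → 0` forces a Gaussian limit by Lévy's
continuity theorem.
-/

section Analysis

variable {E : Type*} [NormedAddCommGroup E] [NormedSpace ℝ E]

lemma norm_pow_sub_pow_le {R : Type*} [SeminormedCommRing R] [NormOneClass R] {z w : R}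
    (hz : ‖z‖ ≤ 1) (hw : ‖w‖ ≤ 1) (m : ℕ) : ‖z ^ m - w ^ m‖ ≤ m * ‖z - w‖ := by
  have hterm (i : ℕ) : ‖z ^ i * w ^ (m - 1 - i)‖ ≤ 1 :=
    (norm_mul_le _ _).trans <| mul_le_one₀
      ((norm_pow_le z i).trans (pow_le_one₀ (norm_nonneg z) hz)) (norm_nonneg _)
      ((norm_pow_le w _).trans (pow_le_one₀ (norm_nonneg w) hw))
  have hsum : ‖∑ i ∈ Finset.range m, z ^ i * w ^ (m - 1 - i)‖ ≤ m := by
    simpa using norm_sum_le_of_le (Finset.range m) fun i _ ↦ hterm i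
  calc ‖z ^ m - w ^ m‖
      = ‖(∑ i ∈ Finset.range m, z ^ i * w ^ (m - 1 - i)) * (z - w)‖ := by
        rw [(Commute.all z w).geom_sum₂_mul]
    _ ≤ ‖∑ i ∈ Finset.range m, z ^ i * w ^ (m - 1 - i)‖ * ‖z - w‖ := norm_mul_le _ _
    _ ≤ m * ‖z - w‖ := by gcongr

lemma taylorWithinEval_eq_univ {f : ℝ → E} {n : ℕ} {s : Set ℝ} {x₀ : ℝ} (hf : ContDiff ℝ n f)
    (hs : UniqueDiffOn ℝ s) (hx₀ : x₀ ∈ s) (x : ℝ) :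
    taylorWithinEval f n s x₀ x = taylorWithinEval f n Set.univ x₀ x := by
  simp only [taylor_within_apply]
  refine Finset.sum_congr rfl fun k hk ↦ ?_
  have hkn : (k : WithTop ℕ∞) ≤ n := mod_cast Finset.mem_range_succ_iff.1 hk
  rw [iteratedDerivWithin_eq_iteratedDeriv hs (hf.of_le hkn).contDiffAt hx₀,
    iteratedDerivWithin_univ]

lemma norm_sub_taylorWithinEval_univ_le [CompleteSpace E] {f : ℝ → E} {n : ℕ} {C : ℝ}
    (hf : ContDiff ℝ (n + 1 : ℕ) f) (hC : ∀ y, ‖iteratedDeriv (n + 1) f y‖ ≤ C) (x₀ x : ℝ) :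
    ‖f x - taylorWithinEval f n Set.univ x₀ x‖ ≤ C * |x - x₀| ^ (n + 1) / n.factorial := by
  rcases eq_or_ne x₀ x with rfl | hne
  · simp
  have hs : UniqueDiffOn ℝ (Set.uIcc x₀ x) := uniqueDiffOn_uIcc hne
  have hfn : ContDiff ℝ n f := hf.of_le (mod_cast n.le_succ)
  rw [← taylorWithinEval_eq_univ hfn hs Set.left_mem_uIcc, taylor_integral_remainder hf.contDiffOn]
  have hbound : ∀ y ∈ Set.uIoc x₀ x,
      ‖((x - y) ^ n / n.factorial) • iteratedDerivWithin (n + 1) f (Set.uIcc x₀ x) y‖ ≤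
        |x - x₀| ^ n / n.factorial * C := by
    intro y hy
    have hy' : y ∈ Set.uIcc x₀ x := Set.uIoc_subset_uIcc hy
    rw [iteratedDerivWithin_eq_iteratedDeriv hs hf.contDiffAt hy', norm_smul, norm_div, norm_pow,
      Real.norm_eq_abs, Real.norm_natCast]
    have hdist : |x - y| ≤ |x - x₀| := Set.abs_sub_right_of_mem_uIcc hy'
    have hCy : ‖iteratedDeriv (n + 1) f y‖ ≤ C := hC y
    gcongr
  refine (intervalIntegral.norm_integral_le_of_norm_le_const hbound).trans_eq ?_
  ring

lemma integral_abs_mul_le_sqrt_mul_sqrt {α : Type*} [MeasurableSpace α] {μ : Measure α}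
    {f g : α → ℝ} (hf : MemLp f 2 μ) (hg : MemLp g 2 μ) :
    ∫ a, |f a * g a| ∂μ ≤ √(∫ a, f a ^ 2 ∂μ) * √(∫ a, g a ^ 2 ∂μ) := by
  have hHolder := integral_mul_norm_le_Lp_mul_Lq (f := f) (g := g) Real.HolderConjugate.two_two
    (by simpa using hf) (by simpa using hg)
  simpa only [abs_mul, Real.sqrt_eq_rpow, Real.norm_eq_abs, Real.rpow_two, sq_abs] using hHolder

end Analysis

section Moments

-- By Fubini, almost every translate `y ↦ x + y` is in `L^p(ν)`; one of them suffices.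
lemma memLp_id_right_of_conv {E : Type*} [NormedAddCommGroup E] [MeasurableSpace E] [BorelSpace E]
    [SecondCountableTopology E] {μ ν : Measure E} [SFinite μ] [NeZero μ] [IsFiniteMeasure ν]
    {p : ENNReal} (hp_ne_zero : p ≠ 0) (hp_ne_top : p ≠ ⊤) (h : MemLp id p (μ ∗ ν)) :
    MemLp id p ν := by
  have hint := h.integrable_norm_rpow hp_ne_zero hp_ne_top
  obtain ⟨x, hx⟩ := ((integrable_conv_iff hint.aestronglyMeasurable).1 hint).1.exists
  have hshift : MemLp (fun y ↦ x + y) p ν :=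
    (integrable_norm_rpow_iff (by fun_prop) hp_ne_zero hp_ne_top).1 hx
  convert! hshift.sub (memLp_const x) using 1
  ext y
  simp

lemma memLp_id_conv {E : Type*} [NormedAddCommGroup E] [MeasurableSpace E] [BorelSpace E]
    [SecondCountableTopology E] {μ ν : Measure E} [IsFiniteMeasure μ] [IsFiniteMeasure ν]
    {p : ENNReal} (hμ : MemLp id p μ) (hν : MemLp id p ν) : MemLp id p (μ ∗ ν) :=
  (memLp_map_measure_iff (by fun_prop) (by fun_prop)).2 ((hμ.comp_fst ν).add (hν.comp_snd μ))

lemma memLp_id_natCast_iff {μ : Measure ℝ} {n : ℕ} (hn : n ≠ 0) :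
    MemLp id n μ ↔ Integrable (fun x ↦ x ^ n) μ := by
  rw [← integrable_norm_rpow_iff (by fun_prop) (by simpa) (by simp),
    ← integrable_norm_iff (f := fun x : ℝ ↦ x ^ n) (by fun_prop)]
  simp

lemma integrable_pow_of_memLp_id {μ : Measure ℝ} [IsFiniteMeasure μ] {k n : ℕ}
    (h : MemLp id n μ) (hkn : k ≤ n) : Integrable (fun x ↦ x ^ k) μ := by
  refine (integrable_norm_iff (by fun_prop)).1 ?_
  simpa using (h.mono_exponent (p := k) (mod_cast hkn)).integrable_norm_pow'

lemma integral_pow_conv {μ ν : Measure ℝ} [IsFiniteMeasure μ] [IsFiniteMeasure ν] {n : ℕ}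
    (hμ : MemLp id n μ) (hν : MemLp id n ν) :
    ∫ x, x ^ n ∂(μ ∗ ν) =
      ∑ i ∈ Finset.range (n + 1), (∫ x, x ^ i ∂μ) * (∫ x, x ^ (n - i) ∂ν) * n.choose i := by
  have hint : ∀ i ∈ Finset.range (n + 1),
      Integrable (fun p : ℝ × ℝ ↦ p.1 ^ i * p.2 ^ (n - i) * (n.choose i : ℝ)) (μ.prod ν) := by
    intro i hi
    exact ((integrable_pow_of_memLp_id hμ (Finset.mem_range_succ_iff.1 hi)).mul_prod
      (integrable_pow_of_memLp_id hν (n.sub_le i))).mul_const _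
  calc ∫ x, x ^ n ∂(μ ∗ ν) = ∫ p : ℝ × ℝ, (p.1 + p.2) ^ n ∂(μ.prod ν) :=
        integral_map (by fun_prop) (by fun_prop)
    _ = ∑ i ∈ Finset.range (n + 1),
          ∫ p : ℝ × ℝ, p.1 ^ i * p.2 ^ (n - i) * (n.choose i : ℝ) ∂(μ.prod ν) := by
        simp only [add_pow, integral_finsetSum _ hint]
    _ = _ := by
        refine Finset.sum_congr rfl fun i _ ↦ ?_
        rw [integral_mul_const, integral_prod_mul (· ^ i) (· ^ (n - i))]

/-- The fourth cumulant of a probability measure on `ℝ` with mean zero, i.e. the excess of its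
fourth moment over that of the centred Gaussian of the same variance. For measures with nonzero
mean this is not the fourth cumulant. -/
noncomputable def centeredFourthCumulant (μ : Measure ℝ) : ℝ :=
  ∫ x, x ^ 4 ∂μ - 3 * (∫ x, x ^ 2 ∂μ) ^ 2

variable {μ ν : Measure ℝ} [IsProbabilityMeasure μ] [IsProbabilityMeasure ν]

lemma integral_id_conv (hμ : MemLp id 1 μ) (hν : MemLp id 1 ν) :
    ∫ x, x ∂(μ ∗ ν) = ∫ x, x ∂μ + ∫ x, x ∂ν := by
  have h := integral_pow_conv (n := 1) (mod_cast hμ) (mod_cast hν)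
  simpa [Finset.sum_range_succ, add_comm] using h

lemma integral_sq_conv_of_centered (hμ : MemLp id 2 μ) (hν : MemLp id 2 ν)
    (hμ_mean : ∫ x, x ∂μ = 0) :
    ∫ x, x ^ 2 ∂(μ ∗ ν) = ∫ x, x ^ 2 ∂μ + ∫ x, x ^ 2 ∂ν := by
  have h := integral_pow_conv (n := 2) (mod_cast hμ) (mod_cast hν)
  simpa [Finset.sum_range_succ, hμ_mean, add_comm] using h

lemma centeredFourthCumulant_conv (hμ : MemLp id 4 μ) (hν : MemLp id 4 ν)
    (hμ_mean : ∫ x, x ∂μ = 0) (hν_mean : ∫ x, x ∂ν = 0) :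
    centeredFourthCumulant (μ ∗ ν) = centeredFourthCumulant μ + centeredFourthCumulant ν := by
  have h2 := integral_sq_conv_of_centered (hμ.mono_exponent (by norm_num))
    (hν.mono_exponent (by norm_num)) hμ_mean
  have h4 : ∫ x, x ^ 4 ∂(μ ∗ ν) =
      ∫ x, x ^ 4 ∂ν + (∫ x, x ^ 2 ∂μ) * (∫ x, x ^ 2 ∂ν) * 6 + ∫ x, x ^ 4 ∂μ := by
    rw [integral_pow_conv (n := 4) (mod_cast hμ) (mod_cast hν)]
    simp [Finset.sum_range_succ, hμ_mean, hν_mean, Nat.choose]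
  rw [centeredFourthCumulant, centeredFourthCumulant, centeredFourthCumulant, h2, h4]
  ring

lemma integral_abs_pow_three_le {μ : Measure ℝ} [IsFiniteMeasure μ] (hμ : MemLp id 4 μ) :
    ∫ x, |x| ^ 3 ∂μ ≤ √(∫ x, x ^ 2 ∂μ) * √(∫ x, x ^ 4 ∂μ) := by
  have hsq : MemLp (fun x : ℝ ↦ x ^ 2) 2 μ := by
    rw [memLp_two_iff_integrable_sq (by fun_prop)]
    simpa [← pow_mul] using (memLp_id_natCast_iff four_ne_zero).1 (mod_cast hμ)
  calc ∫ x, |x| ^ 3 ∂μ = ∫ x, |id x * x ^ 2| ∂μ := by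
        simp only [id, abs_pow, ← pow_succ']
    _ ≤ _ := integral_abs_mul_le_sqrt_mul_sqrt (hμ.mono_exponent (by norm_num)) hsq
    _ = _ := by simp [← pow_mul]

end Moments

section CharFun

lemma norm_charFun_sub_sum_le {μ : Measure ℝ} [IsFiniteMeasure μ] {n : ℕ}
    (hμ : MemLp id (n + 1 : ℕ) μ) (t : ℝ) :
    ‖charFun μ t - ∑ k ∈ Finset.range (n + 1),
        (k.factorial : ℂ)⁻¹ * (t * Complex.I) ^ k * ∫ x, x ^ k ∂μ‖ ≤
      (∫ x, |x| ^ (n + 1) ∂μ) * |t| ^ (n + 1) / n.factorial := by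
  have hderiv (s : ℝ) : ‖iteratedDeriv (n + 1) (charFun μ) s‖ ≤ ∫ x, |x| ^ (n + 1) ∂μ := by
    rw [iteratedDeriv_charFun hμ, norm_mul, norm_pow, Complex.norm_I, one_pow, one_mul]
    refine (norm_integral_le_integral_norm _).trans_eq (integral_congr_ae (ae_of_all _ fun x ↦ ?_))
    have hexp : ‖Complex.exp (s * x * Complex.I)‖ = 1 :=
      mod_cast Complex.norm_exp_ofReal_mul_I (s * x)
    simp [hexp]
  have hμn : MemLp id n μ := hμ.mono_exponent (mod_cast n.le_succ)
  simpa [taylorWithinEval_charFun_zero hμn] using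
    norm_sub_taylorWithinEval_univ_le (contDiff_charFun hμ) hderiv 0 t

lemma norm_charFun_sub_one_sub_le {μ : Measure ℝ} [IsProbabilityMeasure μ] (hμ : MemLp id 3 μ)
    (hmean : ∫ x, x ∂μ = 0) (t : ℝ) :
    ‖charFun μ t - ((1 - t ^ 2 * (∫ x, x ^ 2 ∂μ) / 2 : ℝ) : ℂ)‖ ≤
      |t| ^ 3 / 2 * ∫ x, |x| ^ 3 ∂μ := by
  have h := norm_charFun_sub_sum_le (n := 2) (mod_cast hμ) t
  have hpoly : ∑ k ∈ Finset.range (2 + 1), (k.factorial : ℂ)⁻¹ * (t * Complex.I) ^ k *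
      ∫ x, x ^ k ∂μ = ((1 - t ^ 2 * (∫ x, x ^ 2 ∂μ) / 2 : ℝ) : ℂ) := by
    simp only [Finset.sum_range_succ, Finset.sum_range_zero, pow_zero, pow_one, hmean, mul_pow,
      Complex.I_sq, integral_const, probReal_univ, smul_eq_mul]
    push_cast
    ring
  rw [hpoly] at h
  exact h.trans_eq (by rw [Nat.factorial_two, Nat.cast_ofNat]; ring)

lemma weakConv_of_tendsto_charFun {μs : ℕ → Measure ℝ} {μ : Measure ℝ}
    [hμs : ∀ n, IsProbabilityMeasure (μs n)] [hμ : IsProbabilityMeasure μ]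
    (h : ∀ t, Tendsto (fun n ↦ charFun (μs n) t) atTop (𝓝 (charFun μ t))) : WeakConv μs μ :=
  ProbabilityMeasure.tendsto_iff_forall_integral_tendsto.1 <|
    ProbabilityMeasure.tendsto_of_tendsto_charFun
      (μ := fun n ↦ ⟨μs n, hμs n⟩) (μ₀ := ⟨μ, hμ⟩) h

end CharFun

section ConvPow

lemma convPow_succ (ν : Measure ℝ) (m : ℕ) : convPow ν (m + 1) = convPow ν m ∗ ν := rfl

variable (ν : Measure ℝ) [IsProbabilityMeasure ν]

instance isProbabilityMeasure_convPow (m : ℕ) : IsProbabilityMeasure (convPow ν m) := by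
  induction m with
  | zero => exact Measure.dirac.isProbabilityMeasure
  | succ m ih => rw [convPow_succ]; infer_instance

lemma charFun_convPow (m : ℕ) (t : ℝ) : charFun (convPow ν m) t = charFun ν t ^ m := by
  induction m with
  | zero => simp [convPow]
  | succ m ih => rw [convPow_succ, charFun_conv, ih, pow_succ]

variable {ν}

lemma memLp_id_convPow {p : ENNReal} (hν : MemLp id p ν) (m : ℕ) : MemLp id p (convPow ν m) := by
  induction m with
  | zero => exact (memLp_const (0 : ℝ)).ae_eq (ae_eq_dirac id).symm
  | succ m ih => exact memLp_id_conv ih hν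

lemma integral_id_convPow (hν : MemLp id 1 ν) (m : ℕ) :
    ∫ x, x ∂(convPow ν m) = m * ∫ x, x ∂ν := by
  induction m with
  | zero => simp [convPow]
  | succ m ih =>
    rw [convPow_succ, integral_id_conv (memLp_id_convPow hν m) hν, ih]
    push_cast
    ring

lemma integral_sq_convPow_of_centered (hν : MemLp id 2 ν) (hmean : ∫ x, x ∂ν = 0) (m : ℕ) :
    ∫ x, x ^ 2 ∂(convPow ν m) = m * ∫ x, x ^ 2 ∂ν := by
  induction m with
  | zero => simp [convPow]
  | succ m ih =>
    have hmean_m : ∫ x, x ∂(convPow ν m) = 0 := by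
      rw [integral_id_convPow (hν.mono_exponent (by norm_num)), hmean, mul_zero]
    rw [convPow_succ, integral_sq_conv_of_centered (memLp_id_convPow hν m) hν hmean_m, ih]
    push_cast
    ring

lemma centeredFourthCumulant_convPow (hν : MemLp id 4 ν) (hmean : ∫ x, x ∂ν = 0) (m : ℕ) :
    centeredFourthCumulant (convPow ν m) = m * centeredFourthCumulant ν := by
  induction m with
  | zero => simp [convPow, centeredFourthCumulant]
  | succ m ih =>
    have hmean_m : ∫ x, x ∂(convPow ν m) = 0 := by
      rw [integral_id_convPow (hν.mono_exponent (by norm_num)), hmean, mul_zero]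
    rw [convPow_succ, centeredFourthCumulant_conv (memLp_id_convPow hν m) hν hmean_m hmean, ih]
    push_cast
    ring

lemma norm_charFun_convPow_sub_le (hν : MemLp id 4 ν) (hmean : ∫ x, x ∂ν = 0) (m : ℕ) {t : ℝ}
    (ht : t ^ 2 * ∫ x, x ^ 2 ∂ν ≤ 4) :
    ‖charFun (convPow ν m) t - ((1 - t ^ 2 * (∫ x, x ^ 2 ∂ν) / 2 : ℝ) : ℂ) ^ m‖ ≤
      m * (|t| ^ 3 / 2 * (√(∫ x, x ^ 2 ∂ν) * √(∫ x, x ^ 4 ∂ν))) := by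
  have hunit : ‖((1 - t ^ 2 * (∫ x, x ^ 2 ∂ν) / 2 : ℝ) : ℂ)‖ ≤ 1 := by
    have hnonneg : 0 ≤ t ^ 2 * ∫ x, x ^ 2 ∂ν := by positivity
    rw [Complex.norm_real, Real.norm_eq_abs, abs_le]
    constructor <;> linarith
  rw [charFun_convPow]
  refine (norm_pow_sub_pow_le (norm_charFun_le_one t) hunit m).trans ?_
  gcongr
  refine (norm_charFun_sub_one_sub_le (hν.mono_exponent (by norm_num)) hmean t).trans ?_
  gcongr
  exact integral_abs_pow_three_le hν

end ConvPow

section InfDiv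

variable {μ : Measure ℝ}

lemma exists_centered_convPow_eq (hμ : IsClassicallyInfDiv μ) (hμ4 : MemLp id 4 μ)
    (hmean : ∫ x, x ∂μ = 0) {m : ℕ} (hm : 1 ≤ m) :
    ∃ ν : Measure ℝ, IsProbabilityMeasure ν ∧ μ = convPow ν m ∧ MemLp id 4 ν ∧ ∫ x, x ∂ν = 0 := by
  obtain ⟨ν, hν, rfl⟩ := hμ m hm
  obtain ⟨k, rfl⟩ := Nat.exists_eq_add_of_le' hm
  have hν4 : MemLp id 4 ν :=
    memLp_id_right_of_conv (μ := convPow ν k) (by norm_num) (by norm_num) hμ4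
  rw [integral_id_convPow (hν4.mono_exponent (by norm_num))] at hmean
  exact ⟨ν, hν, rfl, hν4, (mul_eq_zero.1 hmean).resolve_left (by positivity)⟩

lemma norm_charFun_sub_one_add_div_pow_le (hμ : IsClassicallyInfDiv μ) (hμ4 : MemLp id 4 μ)
    (hmean : ∫ x, x ∂μ = 0) {m : ℕ} (hm : 1 ≤ m) {t : ℝ} (ht : t ^ 2 * ∫ x, x ^ 2 ∂μ ≤ 4 * m) :
    ‖charFun μ t - (1 + ((-(t ^ 2 * (∫ x, x ^ 2 ∂μ) / 2) : ℝ) : ℂ) / m) ^ m‖ ≤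
      |t| ^ 3 / 2 *
        √((∫ x, x ^ 2 ∂μ) * (centeredFourthCumulant μ + 3 * (∫ x, x ^ 2 ∂μ) ^ 2 / m)) := by
  obtain ⟨ν, hν, rfl, hν4, hν_mean⟩ := exists_centered_convPow_eq hμ hμ4 hmean hm
  have hm_pos : (0 : ℝ) < m := by positivity
  have hm_ne : (m : ℂ) ≠ 0 := mod_cast hm_pos.ne'
  have hsq := integral_sq_convPow_of_centered (hν4.mono_exponent (by norm_num)) hν_mean m
  have htν : t ^ 2 * ∫ x, x ^ 2 ∂ν ≤ 4 := by
    rw [hsq] at ht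
    nlinarith
  have hbase : 1 + ((-(t ^ 2 * (m * ∫ x, x ^ 2 ∂ν) / 2) : ℝ) : ℂ) / m =
      ((1 - t ^ 2 * (∫ x, x ^ 2 ∂ν) / 2 : ℝ) : ℂ) := by
    push_cast
    field_simp
    ring
  have hfourth : m * centeredFourthCumulant ν + 3 * (m * ∫ x, x ^ 2 ∂ν) ^ 2 / m =
      m * ∫ x, x ^ 4 ∂ν := by
    rw [centeredFourthCumulant]
    field_simp
    ring
  rw [hsq, centeredFourthCumulant_convPow hν4 hν_mean, hbase, hfourth]
  refine (norm_charFun_convPow_sub_le hν4 hν_mean m htν).trans_eq ?_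
  rw [Real.sqrt_mul (by positivity), Real.sqrt_mul hm_pos.le, Real.sqrt_mul hm_pos.le]
  linear_combination
    -(|t| ^ 3 / 2 * √(∫ x, x ^ 2 ∂ν) * √(∫ x, x ^ 4 ∂ν)) * Real.mul_self_sqrt hm_pos.le

lemma norm_charFun_sub_exp_le (hμ : IsClassicallyInfDiv μ) (hμ4 : MemLp id 4 μ)
    (hmean : ∫ x, x ∂μ = 0) (t : ℝ) :
    ‖charFun μ t - Complex.exp (-(t ^ 2 * (∫ x, x ^ 2 ∂μ) / 2) : ℝ)‖ ≤
      |t| ^ 3 / 2 * √((∫ x, x ^ 2 ∂μ) * centeredFourthCumulant μ) := by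
  have hlhs := (tendsto_const_nhds (x := charFun μ t)).sub
    (Complex.tendsto_one_add_div_pow_exp (-(t ^ 2 * (∫ x, x ^ 2 ∂μ) / 2) : ℝ)) |>.norm
  have hrhs : Tendsto (fun m : ℕ ↦ |t| ^ 3 / 2 *
      √((∫ x, x ^ 2 ∂μ) * (centeredFourthCumulant μ + 3 * (∫ x, x ^ 2 ∂μ) ^ 2 / m))) atTop
      (𝓝 (|t| ^ 3 / 2 * √((∫ x, x ^ 2 ∂μ) * (centeredFourthCumulant μ + 0)))) :=
    (((tendsto_const_div_atTop_nhds_zero_nat _).const_add _).const_mul _).sqrt.const_mul _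
  rw [add_zero] at hrhs
  refine le_of_tendsto_of_tendsto hlhs hrhs ?_
  filter_upwards [eventually_ge_atTop 1, eventually_ge_atTop ⌈t ^ 2 * ∫ x, x ^ 2 ∂μ⌉₊]
    with m hm htm
  exact norm_charFun_sub_one_add_div_pow_le hμ hμ4 hmean hm (by linarith [Nat.ceil_le.1 htm])

end InfDiv

theorem fourth_moment_three_implies_gaussian
    (μ : ℕ → Measure ℝ)
    (hprob : ∀ n, IsProbabilityMeasure (μ n))
    (hID : ∀ n, IsClassicallyInfDiv (μ n))
    (hmom4 : ∀ n, Integrable (fun x => x ^ 4) (μ n))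
    (hmean : ∀ n, ∫ x, x ∂(μ n) = 0)
    (hvar : ∀ n, ∫ x, x ^ 2 ∂(μ n) = 1)
    (h4 : Tendsto (fun n => ∫ x, x ^ 4 ∂(μ n)) atTop (𝓝 3)) :
    WeakConv μ (ProbabilityTheory.gaussianReal 0 1) := by
  refine weakConv_of_tendsto_charFun fun t ↦ tendsto_iff_norm_sub_tendsto_zero.2 ?_
  have hbound (n : ℕ) :
      ‖charFun (μ n) t - charFun (ProbabilityTheory.gaussianReal 0 1) t‖ ≤
        |t| ^ 3 / 2 * √(∫ x, x ^ 4 ∂(μ n) - 3) := by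
    have hμ4 : MemLp id 4 (μ n) := mod_cast (memLp_id_natCast_iff four_ne_zero).2 (hmom4 n)
    have h := norm_charFun_sub_exp_le (hID n) hμ4 (hmean n) t
    simpa [centeredFourthCumulant, hvar, ProbabilityTheory.charFun_gaussianReal, neg_div] using h
  have hlim : Tendsto (fun n ↦ |t| ^ 3 / 2 * √(∫ x, x ^ 4 ∂(μ n) - 3)) atTop (𝓝 0) := by
    simpa using (h4.sub_const 3).sqrt.const_mul (|t| ^ 3 / 2)
  exact squeeze_zero (fun n ↦ norm_nonneg _) hbound hlim
end

section
/- Let (μ_n)_{n≥1} be a sequence of Borel probability measures on ℝ with mean 0 (∫ x dμ_n = 0), variance 1 (∫ x² dμ_n = 1), and finite fourth moments satisfying ∫ x⁴ dμ_n → 1 as n → ∞. Then μ_n converges weakly to the symmetric Bernoulli measure b = (1/2)δ_{−1} + (1/2)δ_{1}. -/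
open MeasureTheory Filter Topology BoundedContinuousFunction

/-- The symmetric Bernoulli measure b = (1/2)δ₋₁ + (1/2)δ₁. -/
noncomputable def symmBernoulli : Measure ℝ :=
  (1 / 2 : ENNReal) • Measure.dirac (-1 : ℝ) + (1 / 2 : ENNReal) • Measure.dirac (1 : ℝ)

/-!
When `μ` has second moment `1`, the variance of `x ^ 2` is
`∫ (x ^ 2 - 1) ^ 2 ∂μ = ∫ x ^ 4 ∂μ - 1`, so a fourth moment close to `1` forces `μ` to concentrate
near the zeros `±1` of the penalty `(x ^ 2 - 1) ^ 2`. For a test function `f`, let `chord f` be the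
affine function agreeing with `f` at `±1`. The difference `f - chord f` vanishes at the zeros of the
penalty and grows no faster than it. Hence, by compactness, it is bounded by
`ε + C * (x ^ 2 - 1) ^ 2` for every `ε > 0` and a suitable `C`, and its integral tends to `0`.
The integral of `chord f` depends only on the mean, and at mean `0` it is `(f (-1) + f 1) / 2`.
-/

open Asymptotics

section Penalty

variable {X E : Type*} [TopologicalSpace X] [NormedAddCommGroup E] {f : X → E} {φ : X → ℝ}

theorem exists_norm_le_add_mul_of_isBigO_cocompact (hf : Continuous f) (hφ : Continuous φ)
    (hφ_nonneg : 0 ≤ φ) (hzero : ∀ x, φ x = 0 → f x = 0) (hO : f =O[cocompact X] φ)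
    {ε : ℝ} (hε : 0 < ε) : ∃ C, ∀ x, ‖f x‖ ≤ ε + C * φ x := by
  obtain ⟨c, hc⟩ := hO.bound
  obtain ⟨K, hK, hKc⟩ := mem_cocompact.1 hc
  have hS : IsCompact (K ∩ {x | ε ≤ ‖f x‖}) :=
    hK.inter_right (isClosed_le continuous_const hf.norm)
  have hφ_ne : ∀ x ∈ K ∩ {x | ε ≤ ‖f x‖}, φ x ≠ 0 := fun x hx h0 =>
    hε.not_ge (hx.2.trans_eq (by rw [hzero x h0, norm_zero]))
  obtain ⟨D, hD⟩ := hS.exists_bound_of_continuousOn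
    (hf.norm.continuousOn.div hφ.continuousOn hφ_ne)
  refine ⟨max 0 (max c D), fun x => ?_⟩
  have le_of_le_mul {a : ℝ} (ha : a ≤ max c D) (h : ‖f x‖ ≤ a * φ x) :
      ‖f x‖ ≤ ε + max 0 (max c D) * φ x :=
    calc ‖f x‖ ≤ a * φ x := h
      _ ≤ max 0 (max c D) * φ x :=
        mul_le_mul_of_nonneg_right (ha.trans (le_max_right _ _)) (hφ_nonneg x)
      _ ≤ ε + max 0 (max c D) * φ x := le_add_of_nonneg_left hε.le
  by_cases hxK : x ∈ K
  · rcases le_total ε ‖f x‖ with hlarge | hsmall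
    · have hφx : 0 < φ x := (hφ_nonneg x).lt_of_ne' (hφ_ne x ⟨hxK, hlarge⟩)
      exact le_of_le_mul (le_max_right _ _)
        ((div_le_iff₀ hφx).1 ((Real.le_norm_self _).trans (hD x ⟨hxK, hlarge⟩)))
    · exact hsmall.trans
        (le_add_of_nonneg_right (mul_nonneg (le_max_left _ _) (hφ_nonneg x)))
  · have hcx : ‖f x‖ ≤ c * ‖φ x‖ := hKc hxK
    rw [Real.norm_of_nonneg (hφ_nonneg x)] at hcx
    exact le_of_le_mul (le_max_left _ _) hcx

theorem tendsto_integral_zero_of_isBigO_cocompact [NormedSpace ℝ E] [MeasurableSpace X]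
    {ι : Type*} {l : Filter ι} {μ : ι → Measure X} [∀ i, IsProbabilityMeasure (μ i)]
    (hf : Continuous f) (hφ : Continuous φ) (hφ_nonneg : 0 ≤ φ)
    (hzero : ∀ x, φ x = 0 → f x = 0) (hO : f =O[cocompact X] φ)
    (hint : ∀ i, Integrable φ (μ i)) (hlim : Tendsto (fun i => ∫ x, φ x ∂(μ i)) l (𝓝 0)) :
    Tendsto (fun i => ∫ x, f x ∂(μ i)) l (𝓝 0) := by
  refine NormedAddGroup.tendsto_nhds_zero.2 fun ε hε => ?_
  obtain ⟨C, hC⟩ :=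
    exists_norm_le_add_mul_of_isBigO_cocompact hf hφ hφ_nonneg hzero hO (half_pos hε)
  have norm_integral_le (i : ι) : ‖∫ x, f x ∂(μ i)‖ ≤ ε / 2 + C * ∫ x, φ x ∂(μ i) :=
    calc ‖∫ x, f x ∂(μ i)‖ ≤ ∫ x, (ε / 2 + C * φ x) ∂(μ i) :=
          norm_integral_le_of_norm_le ((integrable_const _).add ((hint i).const_mul C))
            (.of_forall hC)
      _ = ε / 2 + C * ∫ x, φ x ∂(μ i) := by
          rw [integral_add (integrable_const _) ((hint i).const_mul C), integral_const,
            probReal_univ, one_smul, integral_const_mul]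
  have hbound : Tendsto (fun i => ε / 2 + C * ∫ x, φ x ∂(μ i)) l (𝓝 (ε / 2)) := by
    simpa only [mul_zero, add_zero] using (hlim.const_mul C).const_add (ε / 2)
  filter_upwards [hbound.eventually_lt_const (half_lt_self hε)] with i hi
  exact (norm_integral_le i).trans_lt hi

end Penalty

section Growth

theorem isBigO_pow_pow_cocompact_of_le {R : Type*} [NormedRing R] [NormMulClass R] [ProperSpace R]
    {m n : ℕ} (hmn : m ≤ n) : (fun x : R => x ^ m) =O[cocompact R] fun x => x ^ n := by
  simpa only [Metric.cobounded_eq_cocompact] using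
    isBigO_pow_pow_cobounded_of_le (R := R) hmn

open Polynomial in
theorem isTheta_sq_sub_one_sq_cocompact :
    (fun x : ℝ => (x ^ 2 - 1) ^ 2) =Θ[cocompact ℝ] fun x => x ^ 4 := by
  have hdegree : ((X ^ 2 - 1) ^ 2 : ℝ[X]).degree = (X ^ 4 : ℝ[X]).degree := by
    rw [degree_X_pow]
    compute_degree!
  simpa only [IsTheta, eval_pow, eval_sub, eval_X, eval_one, Metric.cobounded_eq_cocompact] using
    And.intro (isBigO_cobounded_of_degree_le hdegree.le)
      (isBigO_cobounded_of_degree_le hdegree.ge)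

variable {E : Type*} [NormedAddCommGroup E] {f : ℝ → E} {μ : Measure ℝ}

theorem integrable_of_isBigO_cocompact_pow [IsLocallyFiniteMeasure μ] {n : ℕ}
    (hf : Continuous f) (hO : f =O[cocompact ℝ] fun x => x ^ n)
    (hint : Integrable (fun x => x ^ n) μ) : Integrable f μ :=
  hf.locallyIntegrable.integrable_of_isBigO_cocompact hO (hint.integrableAtFilter _)

theorem integrable_pow_of_le [IsLocallyFiniteMeasure μ] {m n : ℕ} (hmn : m ≤ n)
    (hint : Integrable (fun x => x ^ n) μ) : Integrable (fun x => x ^ m) μ :=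
  integrable_of_isBigO_cocompact_pow (continuous_pow m) (isBigO_pow_pow_cocompact_of_le hmn) hint

theorem boundedContinuousFunction_isBigO_cocompact_pow (f : ℝ →ᵇ E) (n : ℕ) :
    f =O[cocompact ℝ] fun x => x ^ n := by
  have hbounded : f =O[cocompact ℝ] fun x : ℝ => x ^ 0 := by
    simpa only [pow_zero] using
      IsBigO.of_bound ‖f‖ (.of_forall fun x => by simpa using f.norm_coe_le_norm x)
  exact hbounded.trans (isBigO_pow_pow_cocompact_of_le n.zero_le)

theorem integral_sq_sub_one_sq [IsProbabilityMeasure μ] (hint : Integrable (fun x => x ^ 4) μ) :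
    ∫ x, (x ^ 2 - 1) ^ 2 ∂μ = ∫ x, x ^ 4 ∂μ - 2 * ∫ x, x ^ 2 ∂μ + 1 := by
  have hint2 : Integrable (fun x => 2 * x ^ 2) μ :=
    (integrable_pow_of_le (by norm_num) hint).const_mul 2
  have hint_sub : Integrable (fun x => x ^ 4 - 2 * x ^ 2) μ := hint.sub hint2
  calc ∫ x, (x ^ 2 - 1) ^ 2 ∂μ = ∫ x, (x ^ 4 - 2 * x ^ 2 + 1) ∂μ := by
        congr 1 with x; ring
    _ = ∫ x, x ^ 4 ∂μ - 2 * ∫ x, x ^ 2 ∂μ + 1 := by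
        rw [integral_add hint_sub (integrable_const 1), integral_sub hint hint2,
          integral_const_mul, integral_const, probReal_univ, one_smul]

end Growth

section Chord

variable {E : Type*} [NormedAddCommGroup E] [NormedSpace ℝ E]

/-- The affine function agreeing with `f` at `-1` and `1`, used to reduce a general test function
to one vanishing on the support of `symmBernoulli`. -/
noncomputable def chord (f : ℝ → E) (x : ℝ) : E :=
  ((1 - x) / 2) • f (-1) + ((1 + x) / 2) • f 1

variable (f : ℝ → E)

theorem chord_of_sq_eq_one {x : ℝ} (hx : x ^ 2 = 1) : chord f x = f x := by
  obtain rfl | rfl : x = 1 ∨ x = -1 := eq_or_eq_neg_of_sq_eq_sq x 1 (by rw [hx, one_pow])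
  all_goals norm_num [chord]

theorem continuous_chord : Continuous (chord f) := by
  unfold chord
  fun_prop

theorem isBigO_chord_cocompact_pow {n : ℕ} (hn : 1 ≤ n) :
    chord f =O[cocompact ℝ] fun x => x ^ n := by
  have hconst : (fun _ : ℝ => (1 : ℝ)) =O[cocompact ℝ] fun x => x ^ n := by
    simpa only [pow_zero] using isBigO_pow_pow_cocompact_of_le (R := ℝ) n.zero_le
  have hid : (fun x : ℝ => x) =O[cocompact ℝ] fun x => x ^ n := by
    simpa only [pow_one] using isBigO_pow_pow_cocompact_of_le (R := ℝ) hn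
  have smul_const {g : ℝ → ℝ} (hg : g =O[cocompact ℝ] fun x => x ^ n) (c : E) :
      (fun x => g x • c) =O[cocompact ℝ] fun x => x ^ n := by
    simpa only [smul_eq_mul, mul_one] using hg.smul (isBigO_const_one ℝ c (cocompact ℝ))
  unfold chord
  simp only [div_eq_inv_mul]
  exact (smul_const ((hconst.sub hid).const_mul_left _) _).add
    (smul_const ((hconst.add hid).const_mul_left _) _)

theorem integral_chord [CompleteSpace E] {μ : Measure ℝ} [IsProbabilityMeasure μ]
    (hint : Integrable (fun x => x) μ) : ∫ x, chord f x ∂μ = chord f (∫ x, x ∂μ) := by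
  have hleft : Integrable (fun x : ℝ => (1 - x) / 2) μ :=
    ((integrable_const 1).sub hint).div_const 2
  have hright : Integrable (fun x : ℝ => (1 + x) / 2) μ :=
    ((integrable_const 1).add hint).div_const 2
  simp only [chord]
  rw [integral_add (hleft.smul_const _) (hright.smul_const _), integral_smul_const,
    integral_smul_const, integral_div, integral_div, integral_sub (integrable_const 1) hint,
    integral_add (integrable_const 1) hint, integral_const, probReal_univ, one_smul]

theorem integral_symmBernoulli [CompleteSpace E] : ∫ x, f x ∂symmBernoulli = chord f 0 := by
  have hint (a : ℝ) : Integrable f ((1 / 2 : ENNReal) • Measure.dirac a) :=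
    (integrable_dirac enorm_lt_top).smul_measure (by norm_num)
  rw [symmBernoulli, integral_add_measure (hint _) (hint _)]
  simp [chord]

end Chord

section FourthMoment

variable {ι E : Type*} {l : Filter ι} [NormedAddCommGroup E] [NormedSpace ℝ E]
  {μ : ι → Measure ℝ} [∀ i, IsProbabilityMeasure (μ i)] {f : ℝ → E}

theorem tendsto_integral_sub_chord
    (hmom4 : ∀ i, Integrable (fun x => x ^ 4) (μ i))
    (hmom2_lim : Tendsto (fun i => ∫ x, x ^ 2 ∂(μ i)) l (𝓝 1))
    (hmom4_lim : Tendsto (fun i => ∫ x, x ^ 4 ∂(μ i)) l (𝓝 1))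
    (hf : Continuous f) (hO : f =O[cocompact ℝ] fun x => x ^ 4) :
    Tendsto (fun i => ∫ x, (f x - chord f x) ∂(μ i)) l (𝓝 0) := by
  have hpenalty_cont : Continuous fun x : ℝ => (x ^ 2 - 1) ^ 2 := by fun_prop
  have hpenalty_int (i : ι) : Integrable (fun x => (x ^ 2 - 1) ^ 2) (μ i) :=
    integrable_of_isBigO_cocompact_pow hpenalty_cont isTheta_sq_sub_one_sq_cocompact.1 (hmom4 i)
  have hpenalty_lim : Tendsto (fun i => ∫ x, (x ^ 2 - 1) ^ 2 ∂(μ i)) l (𝓝 0) := by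
    simp only [fun i => integral_sq_sub_one_sq (hmom4 i)]
    convert (hmom4_lim.sub (hmom2_lim.const_mul 2)).add_const 1 using 2
    norm_num
  have hzero (x : ℝ) (hx : (x ^ 2 - 1) ^ 2 = 0) : f x - chord f x = 0 := by
    rw [chord_of_sq_eq_one f (sub_eq_zero.1 (sq_eq_zero_iff.1 hx)), sub_self]
  have hdiff_O : (fun x => f x - chord f x) =O[cocompact ℝ] fun x => (x ^ 2 - 1) ^ 2 :=
    (hO.sub (isBigO_chord_cocompact_pow f (by norm_num))).trans isTheta_sq_sub_one_sq_cocompact.2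
  exact tendsto_integral_zero_of_isBigO_cocompact (hf.sub (continuous_chord f)) hpenalty_cont
    (fun x => sq_nonneg _) hzero hdiff_O hpenalty_int hpenalty_lim

theorem tendsto_integral_chord [CompleteSpace E] (f : ℝ → E)
    (hmom1 : ∀ i, Integrable (fun x => x) (μ i))
    (hmean : Tendsto (fun i => ∫ x, x ∂(μ i)) l (𝓝 0)) :
    Tendsto (fun i => ∫ x, chord f x ∂(μ i)) l (𝓝 (∫ x, f x ∂symmBernoulli)) := by
  simp only [fun i => integral_chord f (hmom1 i), integral_symmBernoulli]
  exact ((continuous_chord f).tendsto 0).comp hmean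

theorem fourth_moment_one_implies_bernoulli_general [CompleteSpace E]
    (hmom4 : ∀ i, Integrable (fun x => x ^ 4) (μ i))
    (hmean : Tendsto (fun i => ∫ x, x ∂(μ i)) l (𝓝 0))
    (hmom2_lim : Tendsto (fun i => ∫ x, x ^ 2 ∂(μ i)) l (𝓝 1))
    (hmom4_lim : Tendsto (fun i => ∫ x, x ^ 4 ∂(μ i)) l (𝓝 1))
    (hf : Continuous f) (hO : f =O[cocompact ℝ] fun x => x ^ 4) :
    Tendsto (fun i => ∫ x, f x ∂(μ i)) l (𝓝 (∫ x, f x ∂symmBernoulli)) := by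
  have hmom1 (i : ι) : Integrable (fun x => x) (μ i) := by
    simpa only [pow_one] using integrable_pow_of_le (m := 1) (by norm_num) (hmom4 i)
  have hf_int (i : ι) : Integrable f (μ i) := integrable_of_isBigO_cocompact_pow hf hO (hmom4 i)
  have hchord_int (i : ι) : Integrable (chord f) (μ i) :=
    integrable_of_isBigO_cocompact_pow (continuous_chord f)
      (isBigO_chord_cocompact_pow f (by norm_num)) (hmom4 i)
  have hsum := (tendsto_integral_sub_chord hmom4 hmom2_lim hmom4_lim hf hO).add
    (tendsto_integral_chord f hmom1 hmean)
  rw [zero_add] at hsum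
  refine hsum.congr fun i => ?_
  rw [integral_sub (hf_int i) (hchord_int i), sub_add_cancel]

end FourthMoment

theorem fourth_moment_one_implies_bernoulli
    (μ : ℕ → Measure ℝ)
    (hprob : ∀ n, IsProbabilityMeasure (μ n))
    (hmom4 : ∀ n, Integrable (fun x => x ^ 4) (μ n))
    (hmean : ∀ n, ∫ x, x ∂(μ n) = 0)
    (hvar : ∀ n, ∫ x, x ^ 2 ∂(μ n) = 1)
    (h4 : Tendsto (fun n => ∫ x, x ^ 4 ∂(μ n)) atTop (𝓝 1)) :
    WeakConv μ symmBernoulli := by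
  intro f
  exact fourth_moment_one_implies_bernoulli_general hmom4
    (by simp only [hmean, tendsto_const_nhds]) (by simp only [hvar, tendsto_const_nhds]) h4
    f.continuous (boundedContinuousFunction_isBigO_cocompact_pow f 4)
end

section
/- Let (μ_n)_{n≥1} and μ be Borel probability measures on ℝ, and for a probability measure ν let G_ν(z) = ∫_ℝ 1/(z − x) dν(x) denote its Cauchy transform, defined for complex z with Im(z) > 0. Then μ_n converges weakly to μ if and only if for every z ∈ ℂ with Im(z) ≥ 1 one has G_{μ_n}(z) → G_μ(z) as n → ∞. -/
open MeasureTheory Filter Topology BoundedContinuousFunction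

/-- The Cauchy transform of a Borel measure ν on ℝ: G_ν(z) = ∫ (z - x)⁻¹ dν(x). -/
noncomputable def cauchyTransform (ν : Measure ℝ) (z : ℂ) : ℂ :=
  ∫ x, (z - (x : ℂ))⁻¹ ∂ν

/-!
The set of bounded continuous functions whose integrals converge is a closed subspace `V`. If it
contains the kernels `r w : x ↦ (w - x)⁻¹` for `w` in a set accumulating at a non-real `z`, then it
contains every power of `r z`: the resolvent identity
`r w * r z ^ (k + 1) = (z - w)⁻¹ • (r w * r z ^ k - r z ^ (k + 1))` and the limit
`r w * r z ^ k → r z ^ (k + 1)` raise the exponent one step at a time. The Cayley transform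
`u = conj (z - x) / (z - x) = 1 - 2 i (im z) r z` embeds the line into the unit circle, and `u ^ n`
is a polynomial in `r z`, so the Fourier coefficients of the measures pushed forward by `u`
converge. On the compact circle this is weak convergence, and weak convergence pulls back along an
embedding: no mass escapes to infinity since the limit is a probability measure on the line.
-/

theorem isInducing_of_leftInverse_of_continuousAt {X Y : Type*} [TopologicalSpace X]
    [TopologicalSpace Y] {f : X → Y} {g : Y → X} (hf : Continuous f)
    (hgf : Function.LeftInverse g f) (hg : ∀ x, ContinuousAt g (f x)) : IsInducing f := by
  refine isInducing_iff_nhds.2 fun x ↦ le_antisymm (hf.tendsto x).le_comap ?_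
  have hgx : Tendsto (g ∘ f) (comap f (𝓝 (f x))) (𝓝 (g (f x))) :=
    (hg x).tendsto.comp tendsto_comap
  rwa [hgf.comp_eq_id, hgf x, tendsto_id'] at hgx

theorem accPt_principal_of_mem_nhds {X : Type*} [TopologicalSpace X] {x : X} [(𝓝[≠] x).NeBot]
    {s : Set X} (hs : s ∈ 𝓝 x) : AccPt x (𝓟 s) :=
  accPt_iff_frequently_nhdsNE.2 (eventually_nhdsWithin_of_eventually_nhds hs).frequently

theorem toSubmodule_adjoin_singleton_le {R A : Type*} [CommSemiring R] [Semiring A] [Algebra R A]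
    {V : Submodule R A} {a : A} (h : ∀ k : ℕ, a ^ k ∈ V) :
    Subalgebra.toSubmodule (Algebra.adjoin R {a}) ≤ V := by
  rw [Algebra.adjoin_eq_span, Submodule.span_le, ← Submonoid.powers_eq_closure]
  rintro _ ⟨k, rfl⟩
  exact h k

theorem isInducing_probabilityMeasure_map {X Y : Type*} [TopologicalSpace X] [MeasurableSpace X]
    [OpensMeasurableSpace X] [TopologicalSpace Y] [TopologicalSpace.PseudoMetrizableSpace Y]
    [TopologicalSpace.SeparableSpace Y] [MeasurableSpace Y] [BorelSpace Y] {f : X → Y}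
    (hf : IsInducing f) :
    IsInducing fun μ : ProbabilityMeasure X ↦ μ.map hf.continuous.measurable.aemeasurable := by
  set pushforward := fun μ : ProbabilityMeasure X ↦ μ.map hf.continuous.measurable.aemeasurable
  refine isInducing_iff_nhds.2 fun μ ↦ le_antisymm
    ((ProbabilityMeasure.continuous_map hf.continuous).tendsto μ).le_comap ?_
  refine tendsto_id'.1 (tendsto_of_forall_isOpen_le_liminf' fun G hG ↦ ?_)
  obtain ⟨U, hU, rfl⟩ := hf.isOpen_iff.1 hG
  have hliminf := ProbabilityMeasure.le_liminf_measure_open_of_tendsto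
    (tendsto_comap (f := pushforward) (x := 𝓝 (pushforward μ))) hU
  simpa only [pushforward, ProbabilityMeasure.map_apply' _ _ hU.measurableSet, id_eq] using hliminf

theorem lipschitzWith_one_integral {X E : Type*} [TopologicalSpace X] [MeasurableSpace X]
    [OpensMeasurableSpace X] [NormedAddCommGroup E] [NormedSpace ℝ E] [MeasurableSpace E]
    [BorelSpace E] [SecondCountableTopology E] (ν : Measure X) [IsProbabilityMeasure ν] :
    LipschitzWith 1 fun f : X →ᵇ E ↦ ∫ x, f x ∂ν :=
  LipschitzWith.of_dist_le_mul fun f g ↦ by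
    simpa [dist_eq_norm, integral_sub (f.integrable ν) (g.integrable ν)]
      using (f - g).norm_integral_le_norm ν

section ConvergenceSubmodule

variable {X ι : Type*} [TopologicalSpace X] [MeasurableSpace X] [OpensMeasurableSpace X]
  {l : Filter ι} {μs : ι → ProbabilityMeasure X} {μ : ProbabilityMeasure X}

/-- The space of bounded continuous test functions whose integrals against `μs` converge along `l`
to the integral against `μ`; weak convergence means that it is everything. -/
def convergenceSubmodule (l : Filter ι) (μs : ι → ProbabilityMeasure X) (μ : ProbabilityMeasure X) :
    Submodule ℂ (X →ᵇ ℂ) where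
  carrier := {f | Tendsto (fun i ↦ ∫ x, f x ∂(μs i : Measure X)) l (𝓝 (∫ x, f x ∂(μ : Measure X)))}
  zero_mem' := by simpa using! tendsto_const_nhds
  add_mem' {f g} hf hg := by
    simpa [integral_add (f.integrable _) (g.integrable _)] using! hf.add hg
  smul_mem' c f hf := by simpa [integral_const_mul] using! hf.const_mul c

theorem mem_convergenceSubmodule {f : X →ᵇ ℂ} : f ∈ convergenceSubmodule l μs μ ↔
    Tendsto (fun i ↦ ∫ x, f x ∂(μs i : Measure X)) l (𝓝 (∫ x, f x ∂(μ : Measure X))) :=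
  Iff.rfl

theorem tendsto_iff_convergenceSubmodule_eq_top :
    Tendsto μs l (𝓝 μ) ↔ convergenceSubmodule l μs μ = ⊤ := by
  rw [ProbabilityMeasure.tendsto_iff_forall_integral_rclike_tendsto ℂ, Submodule.eq_top_iff']
  rfl

theorem isClosed_convergenceSubmodule :
    IsClosed (convergenceSubmodule l μs μ : Set (X →ᵇ ℂ)) :=
  (LipschitzWith.uniformEquicontinuous _ 1 fun i ↦
    lipschitzWith_one_integral (μs i : Measure X)).equicontinuous.isClosed_setOfPred_tendsto
    (lipschitzWith_one_integral (μ : Measure X)).continuous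

theorem one_mem_convergenceSubmodule : 1 ∈ convergenceSubmodule l μs μ := by
  simpa [mem_convergenceSubmodule] using tendsto_const_nhds

end ConvergenceSubmodule

theorem tendsto_of_tendsto_integral_fourier {T : ℝ} [Fact (0 < T)] {ι : Type*} {l : Filter ι}
    {μs : ι → ProbabilityMeasure (AddCircle T)} {μ : ProbabilityMeasure (AddCircle T)}
    (h : ∀ n : ℕ, Tendsto (fun i ↦ ∫ x, fourier n x ∂(μs i : Measure (AddCircle T))) l
      (𝓝 (∫ x, fourier n x ∂(μ : Measure (AddCircle T))))) :
    Tendsto μs l (𝓝 μ) := by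
  let toBounded := ContinuousMap.linearIsometryBoundedOfCompact (AddCircle T) ℂ ℂ
  let V := (convergenceSubmodule l μs μ).comap toBounded.toLinearEquiv.toLinearMap
  have hV : IsClosed (V : Set C(AddCircle T, ℂ)) :=
    isClosed_convergenceSubmodule.preimage toBounded.continuous
  have fourier_mem : ∀ n : ℤ, fourier n ∈ V := by
    intro n
    obtain ⟨k, rfl | rfl⟩ := n.eq_nat_or_neg
    · exact h k
    · have hconj := (Complex.continuous_conj.tendsto _).comp (h k)
      simp only [Function.comp_def, ← integral_conj, ← fourier_neg] at hconj
      exact hconj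
  have hV_top : V = ⊤ := by
    rw [eq_top_iff, ← span_fourier_closure_eq_top]
    exact Submodule.topologicalClosure_minimal _
      (Submodule.span_le.2 (Set.range_subset_iff.2 fourier_mem)) hV
  refine tendsto_iff_convergenceSubmodule_eq_top.2 (Submodule.eq_top_iff'.2 fun f ↦ ?_)
  exact hV_top.ge (Submodule.mem_top (x := toBounded.symm f))

section CauchyKernel

variable {z w : ℂ}

theorem sub_ofReal_ne_zero (hz : z.im ≠ 0) (x : ℝ) : z - x ≠ 0 :=
  fun h ↦ hz (by simpa using congrArg Complex.im h)

theorem norm_sub_ofReal_inv_le (hz : z.im ≠ 0) (x : ℝ) : ‖(z - x)⁻¹‖ ≤ |z.im|⁻¹ := by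
  rw [norm_inv]
  exact inv_anti₀ (abs_pos.2 hz) (by simpa using Complex.abs_im_le_norm (z - x))

/-- The integrand `x ↦ (z - x)⁻¹` of the Cauchy transform as a bounded continuous function on `ℝ`.
It is unbounded for real `z`, where the value is the junk value `0`. -/
noncomputable def cauchyKernel (z : ℂ) : ℝ →ᵇ ℂ :=
  if hz : z.im ≠ 0 then
    .ofNormedAddCommGroup (fun x : ℝ ↦ (z - x)⁻¹)
      (Continuous.inv₀ (by fun_prop) (sub_ofReal_ne_zero hz)) |z.im|⁻¹ (norm_sub_ofReal_inv_le hz)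
  else 0

theorem cauchyKernel_apply (hz : z.im ≠ 0) (x : ℝ) : cauchyKernel z x = (z - x)⁻¹ := by
  rw [cauchyKernel, dif_pos hz]
  rfl

theorem integral_cauchyKernel (hz : z.im ≠ 0) (ν : Measure ℝ) :
    ∫ x, cauchyKernel z x ∂ν = cauchyTransform ν z := by
  simp only [cauchyKernel_apply hz, cauchyTransform]

theorem norm_cauchyKernel_le (hz : z.im ≠ 0) : ‖cauchyKernel z‖ ≤ |z.im|⁻¹ :=
  (norm_le (by positivity)).2 fun x ↦ by
    simpa only [cauchyKernel_apply hz] using norm_sub_ofReal_inv_le hz x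

theorem cauchyKernel_sub_cauchyKernel (hw : w.im ≠ 0) (hz : z.im ≠ 0) :
    cauchyKernel w - cauchyKernel z = (z - w) • (cauchyKernel w * cauchyKernel z) := by
  ext x
  have hwx := sub_ofReal_ne_zero hw x
  have hzx := sub_ofReal_ne_zero hz x
  simp only [coe_sub, coe_smul, coe_mul, Pi.sub_apply, Pi.mul_apply, cauchyKernel_apply hw,
    cauchyKernel_apply hz, smul_eq_mul]
  field_simp
  ring

theorem continuousAt_cauchyKernel (hz : z.im ≠ 0) : ContinuousAt cauchyKernel z := by
  have him : ∀ᶠ w in 𝓝 z, w.im ≠ 0 := Complex.continuous_im.continuousAt.eventually_ne hz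
  have hmodulus : Tendsto (fun w : ℂ ↦ ‖z - w‖ * (|w.im|⁻¹ * |z.im|⁻¹)) (𝓝 z) (𝓝 0) := by
    have hcont : ContinuousAt (fun w : ℂ ↦ ‖z - w‖ * (|w.im|⁻¹ * |z.im|⁻¹)) z := by
      fun_prop (disch := simpa using hz)
    simpa using hcont.tendsto
  refine tendsto_iff_norm_sub_tendsto_zero.2 (squeeze_zero' (.of_forall fun _ ↦ norm_nonneg _) ?_
    hmodulus)
  filter_upwards [him] with w hw
  calc ‖cauchyKernel w - cauchyKernel z‖
      = ‖z - w‖ * ‖cauchyKernel w * cauchyKernel z‖ := by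
        rw [cauchyKernel_sub_cauchyKernel hw hz, norm_smul]
    _ ≤ ‖z - w‖ * (‖cauchyKernel w‖ * ‖cauchyKernel z‖) := by gcongr; exact norm_mul_le _ _
    _ ≤ ‖z - w‖ * (|w.im|⁻¹ * |z.im|⁻¹) := by
        gcongr
        exacts [norm_cauchyKernel_le hw, norm_cauchyKernel_le hz]

theorem cauchyKernel_pow_succ_mem {V : Submodule ℂ (ℝ →ᵇ ℂ)} (hV : IsClosed (V : Set (ℝ →ᵇ ℂ)))
    {s : Set ℂ} (hs : ∀ w ∈ s, w.im ≠ 0) (hz : z.im ≠ 0) (hacc : AccPt z (𝓟 s))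
    (hsV : ∀ w ∈ s, cauchyKernel w ∈ V) (k : ℕ) : cauchyKernel z ^ (k + 1) ∈ V := by
  have pow_succ_mem_of_mul_pow_mem (k : ℕ)
      (hk : ∀ w ∈ s \ {z}, cauchyKernel w * cauchyKernel z ^ k ∈ V) :
      cauchyKernel z ^ (k + 1) ∈ V := by
    have hcont : ContinuousAt (fun w ↦ cauchyKernel w * cauchyKernel z ^ k) z :=
      (continuousAt_cauchyKernel hz).mul continuousAt_const
    have hz_closure : z ∈ closure (s \ {z}) :=
      mem_closure_iff_clusterPt.2 (accPt_principal_iff_clusterPt.1 hacc)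
    rw [pow_succ', ← SetLike.mem_coe, ← hV.closure_eq]
    exact hcont.continuousWithinAt.mem_closure hz_closure hk
  refine pow_succ_mem_of_mul_pow_mem k ?_
  induction k with
  | zero => simpa using fun w hw _ ↦ hsV w hw
  | succ k ih =>
    rintro w ⟨hw, hwz⟩
    have hzw : z - w ≠ 0 := sub_ne_zero.2 (Ne.symm hwz)
    have resolvent_identity : cauchyKernel w * cauchyKernel z ^ (k + 1) =
        (z - w)⁻¹ • (cauchyKernel w * cauchyKernel z ^ k - cauchyKernel z ^ (k + 1)) := by
      rw [pow_succ', ← sub_mul, cauchyKernel_sub_cauchyKernel (hs w hw) hz, smul_mul_assoc,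
        inv_smul_smul₀ hzw, mul_assoc]
    rw [resolvent_identity]
    exact V.smul_mem _ (V.sub_mem (ih w ⟨hw, hwz⟩) (pow_succ_mem_of_mul_pow_mem k ih))

end CauchyKernel

section Cayley

variable {z : ℂ}

/-- The Cayley transform `x ↦ conj (z - x) / (z - x)` from the real line to the unit circle, read
through the identification of the unit circle with `ℝ / ℤ`, where the characters are `fourier n`. -/
noncomputable def cayleyAngle (hz : z.im ≠ 0) (x : ℝ) : UnitAddCircle :=
  (AddCircle.homeomorphCircle one_ne_zero).symm
    (Circle.ofConjDivSelf (z - x) (sub_ofReal_ne_zero hz x))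

theorem toCircle_cayleyAngle (hz : z.im ≠ 0) (x : ℝ) :
    (AddCircle.toCircle (cayleyAngle hz x) : ℂ) = 1 - 2 * z.im * Complex.I * (z - x)⁻¹ := by
  have hzx := sub_ofReal_ne_zero hz x
  have hconj : (starRingEnd ℂ) (z - x) = z - x - 2 * z.im * Complex.I := by
    rw [eq_sub_iff_add_eq, ← eq_sub_iff_add_eq', Complex.sub_conj]
    simp
  rw [← AddCircle.homeomorphCircle_apply one_ne_zero, cayleyAngle, Homeomorph.apply_symm_apply,
    Circle.ofConjDivSelf_coe, hconj]
  field_simp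

theorem fourier_cayleyAngle (hz : z.im ≠ 0) (n : ℕ) (x : ℝ) :
    fourier n (cayleyAngle hz x) =
      ((1 - (2 * z.im * Complex.I) • cauchyKernel z) ^ n : ℝ →ᵇ ℂ) x := by
  rw [fourier_apply, natCast_zsmul, AddCircle.toCircle_nsmul, Circle.coe_pow,
    toCircle_cayleyAngle hz]
  simp [cauchyKernel_apply hz]

theorem continuous_cayleyAngle (hz : z.im ≠ 0) : Continuous (cayleyAngle hz) := by
  refine (Homeomorph.continuous _).comp (Continuous.subtype_mk ?_ _)
  fun_prop (disch := exact sub_ofReal_ne_zero hz)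

theorem isInducing_cayleyAngle (hz : z.im ≠ 0) : IsInducing (cayleyAngle hz) := by
  have him : 2 * (z.im : ℂ) * Complex.I ≠ 0 := by simpa using hz
  have one_sub_toCircle (x : ℝ) :
      1 - (AddCircle.toCircle (cayleyAngle hz x) : ℂ) = 2 * z.im * Complex.I * (z - x)⁻¹ := by
    rw [toCircle_cayleyAngle, sub_sub_cancel]
  refine isInducing_of_leftInverse_of_continuousAt (continuous_cayleyAngle hz)
    (g := fun y ↦ (z - 2 * z.im * Complex.I / (1 - AddCircle.toCircle y)).re)
    (fun x ↦ ?_) fun x ↦ ?_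
  · simp [one_sub_toCircle, div_mul_cancel_left₀ him]
  · have hne : 1 - (AddCircle.toCircle (cayleyAngle hz x) : ℂ) ≠ 0 := by
      rw [one_sub_toCircle]
      exact mul_ne_zero him (inv_ne_zero (sub_ofReal_ne_zero hz x))
    have htoCircle : Continuous fun y : UnitAddCircle ↦ (AddCircle.toCircle y : ℂ) :=
      continuous_subtype_val.comp AddCircle.continuous_toCircle
    exact Complex.continuous_re.continuousAt.comp (continuousAt_const.sub
      (continuousAt_const.div (continuousAt_const.sub htoCircle.continuousAt) hne))

theorem tendsto_of_cauchyKernel_pow_mem {ι : Type*} {l : Filter ι} {μs : ι → ProbabilityMeasure ℝ}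
    {μ : ProbabilityMeasure ℝ} (hz : z.im ≠ 0)
    (h : ∀ k : ℕ, cauchyKernel z ^ k ∈ convergenceSubmodule l μs μ) : Tendsto μs l (𝓝 μ) := by
  refine (isInducing_probabilityMeasure_map (isInducing_cayleyAngle hz)).tendsto_nhds_iff.2
    (tendsto_of_tendsto_integral_fourier fun n ↦ ?_)
  have integral_fourier (ν : ProbabilityMeasure ℝ) :
      ∫ y, fourier n y ∂(ν : Measure ℝ).map (cayleyAngle hz) =
        ∫ x, ((1 - (2 * z.im * Complex.I) • cauchyKernel z) ^ n : ℝ →ᵇ ℂ) x ∂(ν : Measure ℝ) := by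
    rw [integral_map (continuous_cayleyAngle hz).aemeasurable
      (fourier n).continuous.aestronglyMeasurable]
    simp only [fourier_cayleyAngle]
  simp only [Function.comp_apply, ProbabilityMeasure.toMeasure_map, integral_fourier]
  refine mem_convergenceSubmodule.1 (toSubmodule_adjoin_singleton_le h ?_)
  exact pow_mem (sub_mem (one_mem _)
    (Subalgebra.smul_mem _ (Algebra.self_mem_adjoin_singleton ℂ _) _)) n

end Cayley

theorem weakConv_iff_tendsto {μs : ℕ → ProbabilityMeasure ℝ} {μ : ProbabilityMeasure ℝ} :
    WeakConv (fun n ↦ μs n) μ ↔ Tendsto μs atTop (𝓝 μ) :=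
  ProbabilityMeasure.tendsto_iff_forall_integral_tendsto.symm

theorem weakConv_iff_cauchyTransform_general {ι : Type*} {l : Filter ι}
    {μs : ι → ProbabilityMeasure ℝ} {μ : ProbabilityMeasure ℝ} {s : Set ℂ} {z : ℂ}
    (hs : ∀ w ∈ s, w.im ≠ 0) (hz : z.im ≠ 0) (hacc : AccPt z (𝓟 s)) :
    Tendsto μs l (𝓝 μ) ↔
      ∀ w ∈ s, Tendsto (fun i ↦ cauchyTransform (μs i) w) l (𝓝 (cauchyTransform μ w)) := by
  have cauchyKernel_mem_iff : ∀ w ∈ s, (cauchyKernel w ∈ convergenceSubmodule l μs μ ↔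
      Tendsto (fun i ↦ cauchyTransform (μs i) w) l (𝓝 (cauchyTransform μ w))) := fun w hw ↦ by
    simp only [mem_convergenceSubmodule, integral_cauchyKernel (hs w hw)]
  refine ⟨fun h w hw ↦ (cauchyKernel_mem_iff w hw).1 ?_,
    fun h ↦ tendsto_of_cauchyKernel_pow_mem hz fun k ↦ ?_⟩
  · rw [tendsto_iff_convergenceSubmodule_eq_top.1 h]
    exact Submodule.mem_top
  · cases k with
    | zero => simpa using one_mem_convergenceSubmodule
    | succ k =>
      exact cauchyKernel_pow_succ_mem isClosed_convergenceSubmodule hs hz hacc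
        (fun w hw ↦ (cauchyKernel_mem_iff w hw).2 (h w hw)) k

theorem weakConv_iff_cauchyTransform
    (μs : ℕ → Measure ℝ) (μ : Measure ℝ)
    (hprobs : ∀ n, IsProbabilityMeasure (μs n))
    (hprob : IsProbabilityMeasure μ) :
    WeakConv μs μ ↔
      ∀ z : ℂ, 1 ≤ z.im →
        Tendsto (fun n => cauchyTransform (μs n) z) atTop (𝓝 (cauchyTransform μ z)) := by
  have hnhds : {z : ℂ | 1 ≤ z.im} ∈ 𝓝 (2 * Complex.I) :=
    Complex.continuous_im.continuousAt (Ici_mem_nhds (by norm_num))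
  have him (z : ℂ) (hz : 1 ≤ z.im) : z.im ≠ 0 := (zero_lt_one.trans_le hz).ne'
  exact (weakConv_iff_tendsto (μs := fun n ↦ ⟨μs n, hprobs n⟩) (μ := ⟨μ, hprob⟩)).trans
    (weakConv_iff_cauchyTransform_general him (by norm_num) (accPt_principal_of_mem_nhds hnhds))
end
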